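/- For integers $k \ge 2$ and $r \ge 2$, there exists $N$ such that for all $n \ge N$ the following holds: a graph $G \in \mathcal{T}_{n,r,k-1}$ has maximum spectral radius among all graphs in $\mathcal{T}_{n,r,k-1}$ if and only if all $k-1$ embedded edges of $G$ lie inside a single part of size $\lfloor n/r \rfloor$ of the Turán graph $T(n,r)$, and the subgraph induced by these $k-1$ edges is a triangle $K_3$ when $k = 4$ and a star $K_{1,k-1}$ otherwise. -/

import Mathlib

open Finset Matrix SimpleGraph
open scoped Classical

/-- `walkCount G ℓ u` is the number of walks of length `ℓ` in `G` starting at `u`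
(the quantity `w^ℓ_G(u)` of the paper, with `walkCount G 0 u = 1`). -/
noncomputable def walkCount {V : Type*} [Fintype V] (G : SimpleGraph V) : ℕ → V → ℕ
  | 0, _ => 1
  | ℓ + 1, u => ∑ v ∈ Finset.univ.filter (fun v => G.Adj u v), walkCount G ℓ v

/-- `totalWalks G ℓ = W^ℓ(G) = ∑_u w^ℓ_G(u)`, the number of walks of length `ℓ` in `G`. -/
noncomputable def totalWalks {V : Type*} [Fintype V] (G : SimpleGraph V) (ℓ : ℕ) : ℕ :=
  ∑ u, walkCount G ℓ u

/-- The spectral radius `ρ(G)` of a graph `G`: the largest eigenvalue of its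
adjacency matrix. -/
noncomputable def spectralRad {V : Type*} [Fintype V] (G : SimpleGraph V) : ℝ :=
  sSup {μ : ℝ | ∃ x : V → ℝ, x ≠ 0 ∧ (G.adjMatrix ℝ) *ᵥ x = μ • x}
/-- `EXiter ℓ ℋ = EX^ℓ(ℋ)`: the members of `ℋ` that successively maximize
`W¹, W², …, W^ℓ`. -/
noncomputable def EXiter {V : Type*} [Fintype V] :
    ℕ → Set (SimpleGraph V) → Set (SimpleGraph V)
  | 0, ℋ => ℋ
  | ℓ + 1, ℋ =>
      {H ∈ EXiter ℓ ℋ | ∀ H' ∈ EXiter ℓ ℋ, totalWalks H' (ℓ + 1) ≤ totalWalks H (ℓ + 1)}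

/-- `SPEXset 𝒢`: the members of `𝒢` with maximum spectral radius. -/
noncomputable def SPEXset {V : Type*} [Fintype V] (𝒢 : Set (SimpleGraph V)) :
    Set (SimpleGraph V) :=
  {G ∈ 𝒢 | ∀ G' ∈ 𝒢, spectralRad G' ≤ spectralRad G}

/-- `emb n r G = H^G`: the graph of the edges of `G` beyond the Turán graph `T(n,r)`
(whose parts are the residue classes `V_i = {v : (v : ℕ) % r = i}`). -/
def emb (n r : ℕ) (G : SimpleGraph (Fin n)) : SimpleGraph (Fin n) :=
  G \ turanGraph n r

/-- `TuranFam n r t = 𝒯_{n,r,t}`: the graphs obtained from the Turán graph `T(n,r)` by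
embedding `t` edges into its parts. -/
noncomputable def TuranFam (n r t : ℕ) : Set (SimpleGraph (Fin n)) :=
  {G | turanGraph n r ≤ G ∧
    (∀ u v : Fin n, (emb n r G).Adj u v → (u : ℕ) % r = (v : ℕ) % r) ∧
    (emb n r G).edgeFinset.card = t}

/-- `inPart n r i G`: all embedded edges of `G` lie inside the part `V_i` (so
`H^G = H^G_i`). -/
def inPart (n r : ℕ) (i : Fin r) (G : SimpleGraph (Fin n)) : Prop :=
  ∀ u v : Fin n, (emb n r G).Adj u v → (u : ℕ) % r = (i : ℕ)

/-- `classSet n r 𝒢 i = 𝒢_i`. -/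
def classSet (n r : ℕ) (𝒢 : Set (SimpleGraph (Fin n))) (i : Fin r) :
    Set (SimpleGraph (Fin n)) :=
  {G ∈ 𝒢 | inPart n r i G}

/-- `𝒢` is a normal subset of `𝒯_{n,r,t}`: for any `i ≠ j` and any `G ∈ 𝒢_i` there is
`G' ∈ 𝒢_j` with `H^{G'}` a copy of `H^G`. -/
def IsNormal (n r : ℕ) (𝒢 : Set (SimpleGraph (Fin n))) : Prop :=
  ∀ i j : Fin r, i ≠ j → ∀ G ∈ classSet n r 𝒢 i, ∃ G' ∈ classSet n r 𝒢 j,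
    Nonempty (emb n r G ≃g emb n r G')

/-- `partSize n r i = n_i`: the size of the part `V_i` of the Turán graph `T(n,r)`. -/
def partSize (n r : ℕ) (i : Fin r) : ℕ :=
  (Finset.univ.filter (fun v : Fin n => (v : ℕ) % r = (i : ℕ))).card

/-!
Let `H` be the graph of embedded edges and `y` the solution of `μ y = H y + 1`. Writing `s_j` for
the sum of `y` over the `j`-th part, the vector `x v = y v / (1 + s_{p v})` satisfies
`A x - μ x = Φ - 1` in every coordinate, with `Φ = ∑ j, s_j / (1 + s_j)`, so that `μ` is an
eigenvalue with eigenvector `x` exactly when `Φ = 1`. If `y` is only a sub- or supersolution of its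
equation, comparing `Φ` with `1` still bounds the spectral radius from one side.

Expanding `y` in powers of `μ⁻¹` counts walks in `H`: a part of size `m` has
`s = m / μ + W¹ / μ ^ 2 + W² / μ ^ 3 + ⋯`. The total of `W¹` is `2 t` for every embedding of `t`
edges, but the derivative of `s / (1 + s)` decreases, so that an edge in a part larger than the
smallest costs a term of order `μ ^ (-3)`. At the same order, `W² = ∑ deg ^ 2 ≤ t (t + 1)` with
equality exactly when the edges pairwise intersect, that is for stars and triangles. The remaining
tie, at `t = 3`, is broken by solving `μ y = H y + 1` explicitly for both.
-/

section SpectralRadius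

variable {V : Type*} [Fintype V]

theorem spectralRad_eq_sSup_spectrum (G : SimpleGraph V) :
    spectralRad G = sSup (spectrum ℝ (G.adjMatrix ℝ)) := by
  refine congrArg sSup (Set.ext fun μ => ?_)
  rw [← Matrix.spectrum_toLin', ← Module.End.hasEigenvalue_iff_mem_spectrum]
  refine ⟨fun ⟨x, hx, hAx⟩ => Module.End.hasEigenvalue_of_hasEigenvector
    (Module.End.hasEigenvector_iff.2 ⟨Module.End.mem_eigenspace_iff.2 hAx, hx⟩), fun h => ?_⟩
  obtain ⟨x, hx⟩ := h.exists_hasEigenvector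
  exact ⟨x, hx.2, hx.apply_eq_smul⟩

theorem exists_mulVec_eq_spectralRad_smul [Nonempty V] (G : SimpleGraph V) :
    ∃ x : V → ℝ, x ≠ 0 ∧ G.adjMatrix ℝ *ᵥ x = spectralRad G • x := by
  have hmem : spectralRad G ∈ spectrum ℝ (G.adjMatrix ℝ) := by
    rw [spectralRad_eq_sSup_spectrum]
    refine Set.Nonempty.csSup_mem ?_ (Matrix.finite_spectrum _)
    rw [(G.isHermitian_adjMatrix ℝ).spectrum_real_eq_range_eigenvalues]
    exact Set.range_nonempty _
  rw [← Matrix.spectrum_toLin', ← Module.End.hasEigenvalue_iff_mem_spectrum] at hmem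
  obtain ⟨x, hx⟩ := hmem.exists_hasEigenvector
  exact ⟨x, hx.2, hx.apply_eq_smul⟩

theorem dotProduct_adjMatrix_mulVec_le (G : SimpleGraph V) (x : V → ℝ) :
    x ⬝ᵥ G.adjMatrix ℝ *ᵥ x ≤ spectralRad G * (x ⬝ᵥ x) := by
  have hpos : (algebraMap ℝ (Matrix V V ℝ) (spectralRad G) - G.adjMatrix ℝ).PosSemidef := by
    refine Matrix.posSemidef_iff_isHermitian_and_spectrum_nonneg.2 ⟨?_, ?_⟩
    · exact (Matrix.isHermitian_diagonal _).sub (G.isHermitian_adjMatrix ℝ)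
    · rw [← spectrum.singleton_sub_eq, Set.singleton_sub]
      rintro _ ⟨μ, hμ, rfl⟩
      rw [spectralRad_eq_sSup_spectrum]
      exact sub_nonneg.2 (le_csSup (Matrix.finite_spectrum _).bddAbove hμ)
  have := hpos.dotProduct_mulVec_nonneg x
  rwa [sub_mulVec, Algebra.algebraMap_eq_smul_one, smul_mulVec, one_mulVec, star_trivial,
    dotProduct_sub, dotProduct_smul, smul_eq_mul, sub_nonneg] at this

theorem exists_mul_le_mulVec_of_eigenvector {A : Matrix V V ℝ} (hA : ∀ u v, 0 ≤ A u v) {μ : ℝ}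
    {w : V → ℝ} (hw : w ≠ 0) (hAw : A *ᵥ w = μ • w) {x : V → ℝ} (hx : ∀ v, 0 < x v) :
    ∃ v, μ * x v ≤ (A *ᵥ x) v := by
  obtain ⟨v₀, hv₀⟩ := Function.ne_iff.1 hw
  obtain ⟨v, -, hmax⟩ := exists_max_image univ (fun u => |w u| / x u) ⟨v₀, mem_univ _⟩
  set m := |w v| / x v
  have hm_pos : 0 < m := (div_pos (abs_pos.2 hv₀) (hx v₀)).trans_le (hmax v₀ (mem_univ _))
  have hwm (u : V) : |w u| ≤ m * x u := (div_le_iff₀ (hx u)).1 (hmax u (mem_univ _))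
  have hwv : |w v| = m * x v := (div_mul_cancel₀ _ (hx v).ne').symm
  refine ⟨v, le_of_mul_le_mul_left ?_ hm_pos⟩
  calc m * (μ * x v) = μ * |w v| := by rw [hwv]; ring
    _ ≤ |μ * w v| := by rw [abs_mul]; gcongr; exact le_abs_self μ
    _ = |∑ u, A v u * w u| := by rw [← smul_eq_mul, ← Pi.smul_apply, ← hAw]; rfl
    _ ≤ ∑ u, |A v u * w u| := abs_sum_le_sum_abs _ _
    _ ≤ ∑ u, A v u * (m * x u) := by
      refine sum_le_sum fun u _ => ?_
      rw [abs_mul, abs_of_nonneg (hA v u)]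
      exact mul_le_mul_of_nonneg_left (hwm u) (hA v u)
    _ = m * (A *ᵥ x) v := by
      rw [mulVec, dotProduct, mul_sum]
      exact sum_congr rfl fun u _ => by ring

variable [Nonempty V] {G : SimpleGraph V} {x : V → ℝ} {μ : ℝ}

theorem exists_spectralRad_mul_le (G : SimpleGraph V) (hx : ∀ v, 0 < x v) :
    ∃ v, spectralRad G * x v ≤ (G.adjMatrix ℝ *ᵥ x) v := by
  obtain ⟨w, hw, hAw⟩ := exists_mulVec_eq_spectralRad_smul G
  refine exists_mul_le_mulVec_of_eigenvector (fun u v => ?_) hw hAw hx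
  rw [adjMatrix_apply]
  split_ifs <;> norm_num

theorem spectralRad_le (hx : ∀ v, 0 < x v) (h : ∀ v, (G.adjMatrix ℝ *ᵥ x) v ≤ μ * x v) :
    spectralRad G ≤ μ := by
  obtain ⟨v, hv⟩ := exists_spectralRad_mul_le G hx
  exact le_of_mul_le_mul_right (hv.trans (h v)) (hx v)

theorem spectralRad_lt (hx : ∀ v, 0 < x v) (h : ∀ v, (G.adjMatrix ℝ *ᵥ x) v < μ * x v) :
    spectralRad G < μ := by
  obtain ⟨v, hv⟩ := exists_spectralRad_mul_le G hx
  exact lt_of_mul_lt_mul_right (hv.trans_lt (h v)) (hx v).le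

theorem lt_spectralRad (hx : ∀ v, 0 < x v) (h : ∀ v, μ * x v < (G.adjMatrix ℝ *ᵥ x) v) :
    μ < spectralRad G := by
  have hxx : 0 < x ⬝ᵥ x := sum_pos (fun v _ => mul_pos (hx v) (hx v)) univ_nonempty
  refine lt_of_mul_lt_mul_right (lt_of_lt_of_le ?_ (dotProduct_adjMatrix_mulVec_le G x)) hxx.le
  calc μ * (x ⬝ᵥ x) = ∑ v, x v * (μ * x v) := by
        rw [dotProduct, mul_sum]
        exact sum_congr rfl fun v _ => by ring
    _ < x ⬝ᵥ G.adjMatrix ℝ *ᵥ x :=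
      sum_lt_sum_of_nonempty univ_nonempty fun v _ => mul_lt_mul_of_pos_left (h v) (hx v)

end SpectralRadius

section CompleteMultipartite

variable {V ι : Type*}

/-- The complete multipartite graph whose parts are the fibres of `p`. -/
def completeMultipartite (p : V → ι) : SimpleGraph V :=
  (⊤ : SimpleGraph ι).comap p

/-- The graph of the edges of `G` beyond those of the complete multipartite graph with parts the
fibres of `p` (the `H^G` of the paper, for an arbitrary partition). -/
def embedded (p : V → ι) (G : SimpleGraph V) : SimpleGraph V :=
  G \ completeMultipartite p

variable {p : V → ι} {G : SimpleGraph V}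

theorem completeMultipartite_adj {u v : V} : (completeMultipartite p).Adj u v ↔ p u ≠ p v :=
  Iff.rfl

theorem embedded_adj {u v : V} : (embedded p G).Adj u v ↔ G.Adj u v ∧ p u = p v :=
  and_congr_right' not_not

variable [Fintype V] [DecidableEq ι]

/-- The total weight of the part `p ⁻¹' {j}` under `y`. -/
def partSum (p : V → ι) (y : V → ℝ) (j : ι) : ℝ :=
  ∑ v with p v = j, y v

/-- The increasing function `s ↦ s / (1 + s)`: the weight of a part after `partNormalize`, in
terms of its weight `s` before. It is only used for `0 ≤ s`. -/
noncomputable def saturation (s : ℝ) : ℝ :=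
  s / (1 + s)

/-- `y` rescaled by `1 / (1 + s)` on each part of weight `s`. If `y` solves the resolvent equation
`μ y = H y + 1` of the graph `H` embedded in the parts, this is the candidate eigenvector, for the
eigenvalue `μ`, of the complete multipartite graph with `H` added. -/
noncomputable def partNormalize (p : V → ι) (y : V → ℝ) (v : V) : ℝ :=
  y v / (1 + partSum p y (p v))

/-- The secular function: if `y` is the solution of the resolvent equation at `μ`, then `μ` is an
eigenvalue with eigenvector `partNormalize p y` exactly when this sum is `1`. -/
noncomputable def secular [Fintype ι] (p : V → ι) (y : V → ℝ) : ℝ :=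
  ∑ j, saturation (partSum p y j)

variable {y : V → ℝ}

theorem partSum_nonneg (hy : ∀ v, 0 ≤ y v) (j : ι) : 0 ≤ partSum p y j :=
  sum_nonneg fun v _ => hy v

theorem le_partSum (hy : ∀ v, 0 ≤ y v) (v : V) : y v ≤ partSum p y (p v) :=
  single_le_sum (fun u _ => hy u) (by simp)

theorem sum_partSum [Fintype ι] (p : V → ι) (y : V → ℝ) : ∑ j, partSum p y j = ∑ v, y v :=
  sum_fiberwise univ p y

theorem partSum_partNormalize (p : V → ι) (y : V → ℝ) (j : ι) :
    partSum p (partNormalize p y) j = saturation (partSum p y j) := by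
  conv_rhs => rw [saturation, partSum, sum_div]
  refine sum_congr rfl fun v hv => ?_
  rw [partNormalize, (mem_filter.1 hv).2, partSum]

theorem partNormalize_pos (hy : ∀ v, 0 < y v) (v : V) : 0 < partNormalize p y v := by
  have := partSum_nonneg (p := p) (fun u => (hy u).le) (p v)
  exact div_pos (hy v) (by linarith)

theorem adjMatrix_mulVec_eq_sum_sub_partSum_add (hG : completeMultipartite p ≤ G) (x : V → ℝ)
    (v : V) : (G.adjMatrix ℝ *ᵥ x) v =
      ∑ u, x u - partSum p x (p v) + ((embedded p G).adjMatrix ℝ *ᵥ x) v := by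
  simp only [partSum, mulVec, dotProduct, adjMatrix_apply, ite_mul, one_mul, zero_mul,
    sum_filter, ← sum_sub_distrib, ← sum_add_distrib, embedded_adj]
  refine sum_congr rfl fun u _ => ?_
  by_cases huv : p u = p v
  · simp [huv]
  · simp [huv, Ne.symm huv, hG (completeMultipartite_adj.2 (Ne.symm huv))]

theorem adjMatrix_embedded_mulVec_partNormalize (p : V → ι) (G : SimpleGraph V) (y : V → ℝ)
    (v : V) : ((embedded p G).adjMatrix ℝ *ᵥ partNormalize p y) v =
      ((embedded p G).adjMatrix ℝ *ᵥ y) v / (1 + partSum p y (p v)) := by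
  simp only [adjMatrix_mulVec_apply, sum_div]
  refine sum_congr rfl fun u hu => ?_
  rw [partNormalize, (embedded_adj.1 ((mem_neighborFinset _ _ _).1 hu)).2]

variable [Fintype ι] {μ : ℝ}

theorem adjMatrix_mulVec_partNormalize_sub (hG : completeMultipartite p ≤ G) (hy : ∀ v, 0 ≤ y v)
    (μ : ℝ) (v : V) :
    (G.adjMatrix ℝ *ᵥ partNormalize p y) v - μ * partNormalize p y v = secular p y - 1 +
      (((embedded p G).adjMatrix ℝ *ᵥ y) v + 1 - μ * y v) /
        (1 + partSum p y (p v)) := by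
  have hs : 1 + partSum p y (p v) ≠ 0 := by have := partSum_nonneg (p := p) hy (p v); positivity
  have hsum : ∑ u, partNormalize p y u = secular p y := by
    simp only [← sum_partSum p, partSum_partNormalize, secular]
  rw [adjMatrix_mulVec_eq_sum_sub_partSum_add hG, hsum, partSum_partNormalize,
    adjMatrix_embedded_mulVec_partNormalize, saturation, partNormalize]
  field_simp
  ring

theorem adjMatrix_mulVec_partNormalize_sub_le (hG : completeMultipartite p ≤ G)
    (hy : ∀ v, 0 ≤ y v)
    (hsup : ∀ v, ((embedded p G).adjMatrix ℝ *ᵥ y) v + 1 ≤ μ * y v) (v : V) :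
    (G.adjMatrix ℝ *ᵥ partNormalize p y) v - μ * partNormalize p y v ≤ secular p y - 1 := by
  have hs := partSum_nonneg (p := p) hy (p v)
  rw [adjMatrix_mulVec_partNormalize_sub hG hy, add_le_iff_nonpos_right]
  exact div_nonpos_of_nonpos_of_nonneg (sub_nonpos.2 (hsup v)) (by linarith)

variable [Nonempty V]

theorem spectralRad_le_of_secular_le_one (hG : completeMultipartite p ≤ G) (hy : ∀ v, 0 < y v)
    (hsup : ∀ v, ((embedded p G).adjMatrix ℝ *ᵥ y) v + 1 ≤ μ * y v)
    (h : secular p y ≤ 1) : spectralRad G ≤ μ :=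
  spectralRad_le (partNormalize_pos hy) fun v => by
    have := adjMatrix_mulVec_partNormalize_sub_le hG (fun u => (hy u).le) hsup v
    linarith

theorem spectralRad_lt_of_secular_lt_one (hG : completeMultipartite p ≤ G) (hy : ∀ v, 0 < y v)
    (hsup : ∀ v, ((embedded p G).adjMatrix ℝ *ᵥ y) v + 1 ≤ μ * y v)
    (h : secular p y < 1) : spectralRad G < μ :=
  spectralRad_lt (partNormalize_pos hy) fun v => by
    have := adjMatrix_mulVec_partNormalize_sub_le hG (fun u => (hy u).le) hsup v
    linarith

theorem lt_spectralRad_of_one_lt_secular (hG : completeMultipartite p ≤ G) (hy : ∀ v, 0 < y v)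
    (hsub : ∀ v, μ * y v ≤ ((embedded p G).adjMatrix ℝ *ᵥ y) v + 1)
    (h : 1 < secular p y) : μ < spectralRad G :=
  lt_spectralRad (partNormalize_pos hy) fun v => by
    have hs := partSum_nonneg (p := p) (fun u => (hy u).le) (p v)
    have hid := adjMatrix_mulVec_partNormalize_sub hG (fun u => (hy u).le) μ v
    have hrest : 0 ≤ (((embedded p G).adjMatrix ℝ *ᵥ y) v + 1 - μ * y v) /
        (1 + partSum p y (p v)) := div_nonneg (sub_nonneg.2 (hsub v)) (by linarith)
    linarith

end CompleteMultipartite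

section EmbeddedCopy

variable {V W : Type*} {H : SimpleGraph V} {Γ : SimpleGraph W}

theorem nonempty_induce_support_iso_iff :
    Nonempty (H.induce H.support ≃g Γ) ↔ ∃ f : Γ ↪g H, Set.range f = H.support := by
  refine ⟨fun ⟨e⟩ => ⟨(Embedding.induce H.support).comp e.symm.toEmbedding, ?_⟩,
    fun ⟨f, hf⟩ => ⟨hf ▸ f.isoInduceRange.symm⟩⟩
  exact (e.symm.toEquiv.surjective.range_comp Subtype.val).trans Subtype.range_coe

variable [Fintype V]

theorem adjMatrix_mulVec_eq_zero_of_notMem_support {v : V} (hv : v ∉ H.support) (x : V → ℝ) :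
    (H.adjMatrix ℝ *ᵥ x) v = 0 := by
  rw [adjMatrix_mulVec_apply]
  exact sum_eq_zero fun u hu => absurd ⟨u, (mem_neighborFinset _ _ _).1 hu⟩ hv

theorem adjMatrix_mulVec_embedding [Fintype W] [DecidableRel Γ.Adj] (f : Γ ↪g H)
    (hf : H.support ⊆ Set.range f) (x : V → ℝ) (a : W) :
    (H.adjMatrix ℝ *ᵥ x) (f a) = (Γ.adjMatrix ℝ *ᵥ (x ∘ f)) a := by
  simp only [mulVec, dotProduct, adjMatrix_apply]
  refine (Fintype.sum_of_injective f f.injective _ _ (fun u hu => ?_) fun b => ?_).symm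
  · rw [if_neg fun h => hu (hf ⟨f a, h.symm⟩), zero_mul]
  · simp only [f.map_adj_iff, Function.comp_apply]

theorem resolvent_extend [Fintype W] [DecidableRel Γ.Adj] (f : Γ ↪g H)
    (hf : Set.range f = H.support) {μ : ℝ} (hμ : μ ≠ 0) {z : W → ℝ}
    (hz : ∀ a, (Γ.adjMatrix ℝ *ᵥ z) a + 1 = μ * z a) (v : V) :
    (H.adjMatrix ℝ *ᵥ Function.extend f z fun _ => 1 / μ) v + 1 =
      μ * Function.extend f z (fun _ => 1 / μ) v := by
  by_cases hv : v ∈ Set.range f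
  · obtain ⟨a, rfl⟩ := hv
    rw [adjMatrix_mulVec_embedding f hf.ge, f.injective.extend_apply, ← hz,
      Function.extend_comp f.injective]
  · rw [adjMatrix_mulVec_eq_zero_of_notMem_support (hf ▸ hv), Function.extend_apply' _ _ _ hv,
      mul_one_div_cancel hμ, zero_add]

theorem partSum_extend {ι : Type*} [Fintype W] [DecidableEq ι] {p : V → ι} {f : W → V}
    (hf : f.Injective) {i : ι} (hi : ∀ a, p (f a) = i) (z : W → ℝ) (c : ℝ) (j : ι) :
    partSum p (Function.extend f z fun _ => c) j =
      #{v | p v = j} * c + if j = i then ∑ a, (z a - c) else 0 := by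
  have hsplit (v : V) :
      Function.extend f z (fun _ => c) v = c + Function.extend f (fun a => z a - c) 0 v := by
    by_cases hv : v ∈ Set.range f
    · obtain ⟨a, rfl⟩ := hv
      simp only [hf.extend_apply, add_sub_cancel]
    · simp only [Function.extend_apply' _ _ _ hv, Pi.zero_apply, add_zero]
  rw [partSum, sum_congr rfl fun v _ => hsplit v, sum_add_distrib, sum_const, nsmul_eq_mul,
    sum_filter]
  congr 1
  rw [← Fintype.sum_of_injective f hf (fun a => if j = i then z a - c else 0)]
  · split_ifs <;> simp
  · intro v hv
    rw [Function.extend_apply' _ _ _ hv, Pi.zero_apply, ite_self]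
  · intro a
    simp only [hi, hf.extend_apply, eq_comm]

end EmbeddedCopy

section ExtremalShape

/-- The weight of the resolvent solution of the star `K_{1,t}` at `μ`, in excess of the weight
`(t + 1) / μ` of `t + 1` isolated vertices. -/
noncomputable def starExcess (t μ : ℝ) : ℝ :=
  (2 * t * μ + t * (t + 1)) / (μ * (μ ^ 2 - t))

/-- The weight of the resolvent solution of the triangle at `μ`, in excess of the weight `3 / μ`
of three isolated vertices. -/
noncomputable def triangleExcess (μ : ℝ) : ℝ :=
  6 / (μ * (μ - 2))

theorem adjMatrix_completeBipartiteGraph_mulVec_inl {V W : Type*} [Fintype V] [Fintype W]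
    (z : V ⊕ W → ℝ) (a : V) :
    ((completeBipartiteGraph V W).adjMatrix ℝ *ᵥ z) (Sum.inl a) = ∑ b, z (Sum.inr b) := by
  simp [mulVec, dotProduct, adjMatrix_apply]

theorem adjMatrix_completeBipartiteGraph_mulVec_inr {V W : Type*} [Fintype V] [Fintype W]
    (z : V ⊕ W → ℝ) (b : W) :
    ((completeBipartiteGraph V W).adjMatrix ℝ *ᵥ z) (Sum.inr b) = ∑ a, z (Sum.inl a) := by
  simp [mulVec, dotProduct, adjMatrix_apply]

variable {t : ℕ} {μ : ℝ}

theorem exists_star_resolvent (hμ : 0 < μ) (ht : t < μ ^ 2) :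
    ∃ z : Unit ⊕ Fin t → ℝ, (∀ a, 0 < z a) ∧
      (∀ a, ((completeBipartiteGraph Unit (Fin t)).adjMatrix ℝ *ᵥ z) a + 1 = μ * z a) ∧
      ∑ a, (z a - 1 / μ) = starExcess t μ := by
  have hd : 0 < μ ^ 2 - t := sub_pos.2 ht
  refine ⟨Sum.elim (fun _ => (μ + t) / (μ ^ 2 - t)) fun _ => (μ + 1) / (μ ^ 2 - t), ?_, ?_, ?_⟩
  · rintro (_ | _) <;> simp only [Sum.elim_inl, Sum.elim_inr] <;> positivity
  · rintro (_ | _)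
    · simp only [adjMatrix_completeBipartiteGraph_mulVec_inl, Sum.elim_inl, Sum.elim_inr,
        sum_const, card_univ, Fintype.card_fin, nsmul_eq_mul]
      field_simp
      ring
    · simp only [adjMatrix_completeBipartiteGraph_mulVec_inr, Sum.elim_inl, Sum.elim_inr,
        Fintype.sum_unique]
      field_simp
      ring
  · simp only [Fintype.sum_sum_type, Sum.elim_inl, Sum.elim_inr, sum_const, card_univ,
      Fintype.card_unit, Fintype.card_fin, nsmul_eq_mul, starExcess]
    field_simp
    ring

theorem exists_triangle_resolvent (hμ : 2 < μ) :
    ∃ z : Fin 3 → ℝ, (∀ a, 0 < z a) ∧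
      (∀ a, ((completeGraph (Fin 3)).adjMatrix ℝ *ᵥ z) a + 1 = μ * z a) ∧
      ∑ a, (z a - 1 / μ) = triangleExcess μ := by
  have hd : 0 < μ - 2 := sub_pos.2 hμ
  refine ⟨Function.const _ (1 / (μ - 2)), fun _ => one_div_pos.2 hd, fun a => ?_, ?_⟩
  · have hdeg : (completeGraph (Fin 3)).degree a = 2 := complete_graph_degree a
    rw [adjMatrix_mulVec_const_apply, hdeg, Function.const_apply]
    field_simp
    norm_num
  · simp only [Function.const_apply, sum_const, card_univ, Fintype.card_fin, nsmul_eq_mul,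
      triangleExcess]
    field_simp
    norm_num

/-- The excess weight of the extremal embedded graph with `t` edges. -/
noncomputable def extremalExcess (t : ℕ) (μ : ℝ) : ℝ :=
  if t = 3 then triangleExcess μ else starExcess t μ

theorem le_starExcess (hμ : 0 < μ) (ht : t < μ ^ 2) :
    2 * t / μ ^ 2 + t * (t + 1) / μ ^ 3 ≤ starExcess t μ := by
  have hd : 0 < μ ^ 2 - t := sub_pos.2 ht
  rw [starExcess, ← sub_nonneg]
  have : (2 * t * μ + t * (t + 1)) / (μ * (μ ^ 2 - t)) - (2 * t / μ ^ 2 + t * (t + 1) / μ ^ 3) =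
      t ^ 2 * (2 * μ + (t + 1)) / (μ ^ 3 * (μ ^ 2 - t)) := by
    field_simp
    ring
  rw [this]
  positivity

theorem starExcess_three_lt_triangleExcess (hμ : 3 < μ) :
    starExcess 3 μ < triangleExcess μ := by
  have hd : 0 < μ ^ 2 - 3 := by nlinarith
  have hd' : 0 < μ - 2 := by linarith
  rw [starExcess, triangleExcess, div_lt_div_iff₀ (by positivity) (by positivity)]
  nlinarith

end ExtremalShape

section WalkCount

variable {V : Type*} [Fintype V]

theorem walkCount_succ (H : SimpleGraph V) (ℓ : ℕ) (v : V) :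
    walkCount H (ℓ + 1) v = ∑ u ∈ H.neighborFinset v, walkCount H ℓ u := by
  rw [neighborFinset_eq_filter, walkCount]

theorem walkCount_one (H : SimpleGraph V) (v : V) : walkCount H 1 v = H.degree v := by
  rw [walkCount_succ]
  simp only [walkCount, sum_const, card_neighborFinset_eq_degree, smul_eq_mul, mul_one]

theorem walkCount_two (H : SimpleGraph V) (v : V) :
    walkCount H 2 v = ∑ u ∈ H.neighborFinset v, H.degree u := by
  simp only [walkCount_succ H 1, walkCount_one]

theorem adjMatrix_mulVec_walkCount (H : SimpleGraph V) (ℓ : ℕ) (v : V) :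
    (H.adjMatrix ℝ *ᵥ fun u => (walkCount H ℓ u : ℝ)) v = walkCount H (ℓ + 1) v := by
  rw [adjMatrix_mulVec_apply, walkCount_succ, Nat.cast_sum]

theorem walkCount_succ_le {H : SimpleGraph V} {Δ : ℕ} (hΔ : ∀ v, H.degree v ≤ Δ) (ℓ : ℕ) (v : V) :
    walkCount H (ℓ + 1) v ≤ Δ * walkCount H ℓ v := by
  induction ℓ generalizing v with
  | zero => exact (walkCount_one H v).trans_le ((hΔ v).trans_eq (mul_one Δ).symm)
  | succ ℓ ih =>
    rw [walkCount_succ, walkCount_succ H ℓ, mul_sum]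
    exact sum_le_sum fun u _ => ih u

theorem totalWalks_one (H : SimpleGraph V) : totalWalks H 1 = 2 * #H.edgeFinset := by
  simp only [totalWalks, walkCount_one, sum_degrees_eq_twice_card_edges]

theorem sum_neighborFinset_const (H : SimpleGraph V) (c : ℕ) :
    ∑ v, ∑ _u ∈ H.neighborFinset v, c = 2 * #H.edgeFinset * c := by
  simp only [sum_const, card_neighborFinset_eq_degree, smul_eq_mul, ← sum_mul,
    sum_degrees_eq_twice_card_edges]

theorem two_mul_totalWalks_two (H : SimpleGraph V) :
    2 * totalWalks H 2 = ∑ v, ∑ u ∈ H.neighborFinset v, (H.degree v + H.degree u) := by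
  have hswap : ∑ v, ∑ _u ∈ H.neighborFinset v, H.degree v = totalWalks H 2 := by
    simp only [totalWalks, walkCount_two, neighborFinset_eq_filter, sum_filter]
    rw [sum_comm]
    simp only [H.adj_comm]
  simp only [sum_add_distrib, hswap, two_mul]
  simp only [totalWalks, walkCount_two]

/-- Any two edges of `H` share a vertex. -/
def EdgesIntersect {V : Type*} (H : SimpleGraph V) : Prop :=
  ∀ ⦃a b c d : V⦄, H.Adj a b → H.Adj c d → a = c ∨ a = d ∨ b = c ∨ b = d

variable {H : SimpleGraph V} {u v : V}

theorem degree_add_degree_of_adj (h : H.Adj u v) :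
    H.degree u + H.degree v = #(H.incidenceFinset u ∪ H.incidenceFinset v) + 1 := by
  have hinter : H.incidenceFinset u ∩ H.incidenceFinset v = {s(u, v)} := by
    rw [← coe_inj]
    simpa using H.incidenceSet_inter_incidenceSet_of_adj h
  rw [← card_incidenceFinset_eq_degree, ← card_incidenceFinset_eq_degree,
    ← card_union_add_card_inter, hinter, card_singleton]

theorem incidenceFinset_union_subset (H : SimpleGraph V) (u v : V) :
    H.incidenceFinset u ∪ H.incidenceFinset v ⊆ H.edgeFinset :=
  union_subset (H.incidenceFinset_subset u) (H.incidenceFinset_subset v)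

theorem degree_add_degree_le_of_adj (h : H.Adj u v) :
    H.degree u + H.degree v ≤ #H.edgeFinset + 1 := by
  rw [degree_add_degree_of_adj h]
  exact Nat.succ_le_succ (card_le_card (incidenceFinset_union_subset H u v))

theorem degree_add_degree_lt_of_adj {a b : V} (h : H.Adj u v) (hab : H.Adj a b)
    (hdisj : ¬ (u = a ∨ u = b ∨ v = a ∨ v = b)) :
    H.degree u + H.degree v < #H.edgeFinset + 1 := by
  rw [degree_add_degree_of_adj h, Nat.succ_lt_succ_iff]
  refine card_lt_card ((ssubset_iff_of_subset (incidenceFinset_union_subset H u v)).2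
    ⟨s(a, b), mem_edgeFinset.2 (H.mem_edgeSet.2 hab), fun hmem => hdisj ?_⟩)
  rw [mem_union, mem_incidenceFinset, mem_incidenceFinset] at hmem
  simpa only [Sym2.mem_iff, or_assoc] using hmem.imp And.right And.right

theorem totalWalks_two_le (H : SimpleGraph V) :
    totalWalks H 2 ≤ #H.edgeFinset * (#H.edgeFinset + 1) := by
  refine le_of_mul_le_mul_left ?_ two_pos
  rw [two_mul_totalWalks_two, ← mul_assoc, ← sum_neighborFinset_const]
  exact sum_le_sum fun v _ => sum_le_sum fun u hu =>
    degree_add_degree_le_of_adj ((mem_neighborFinset _ _ _).1 hu)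

theorem totalWalks_two_lt_of_not_edgesIntersect (h : ¬ EdgesIntersect H) :
    totalWalks H 2 < #H.edgeFinset * (#H.edgeFinset + 1) := by
  simp only [EdgesIntersect, not_forall] at h
  obtain ⟨u, v, a, b, huv, hab, hdisj⟩ := h
  have hle (w x : V) (hx : x ∈ H.neighborFinset w) := degree_add_degree_le_of_adj
    ((mem_neighborFinset _ _ _).1 hx)
  refine lt_of_mul_lt_mul_left ?_ zero_le_two
  rw [two_mul_totalWalks_two, ← mul_assoc, ← sum_neighborFinset_const]
  exact sum_lt_sum (fun w _ => sum_le_sum (hle w)) ⟨u, mem_univ u, sum_lt_sum (hle u)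
    ⟨v, (mem_neighborFinset _ _ _).2 huv, degree_add_degree_lt_of_adj huv hab hdisj⟩⟩

end WalkCount

section WalkSupersolution

variable {V ι : Type*} [Fintype V]

/-- The Neumann series `∑ ℓ, w^ℓ / μ ^ (ℓ + 1)` of the solution of the resolvent equation
`μ y = H y + 1`, with the terms from `ℓ = 2` on replaced by the geometric series of ratio `t / μ`.
This is a supersolution as soon as `t` bounds the degrees of `H`. -/
noncomputable def walkSupersolution (H : SimpleGraph V) (t μ : ℝ) (v : V) : ℝ :=
  1 / μ + (walkCount H 1 v / μ ^ 2 + walkCount H 2 v / (μ ^ 2 * (μ - t)))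

/-- The weight of `walkSupersolution` in the part `p ⁻¹' {j}`, in excess of `1 / μ` per vertex. -/
noncomputable def walkExcess [DecidableEq ι] (p : V → ι) (H : SimpleGraph V) (t μ : ℝ) (j : ι) :
    ℝ :=
  partSum p (fun v => walkCount H 1 v / μ ^ 2 + walkCount H 2 v / (μ ^ 2 * (μ - t))) j

variable {H : SimpleGraph V} {t : ℕ} {μ : ℝ}

theorem walkSupersolution_pos (hμ : 0 < μ) (ht : t < μ) (v : V) :
    0 < walkSupersolution H t μ v := by
  have := sub_pos.2 ht
  unfold walkSupersolution
  positivity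

theorem adjMatrix_mulVec_walkSupersolution_le (hdeg : ∀ v, H.degree v ≤ t) (hμ : 0 < μ)
    (ht : t < μ) (v : V) :
    (H.adjMatrix ℝ *ᵥ walkSupersolution H t μ) v + 1 ≤ μ * walkSupersolution H t μ v := by
  have hd : 0 < μ - t := sub_pos.2 ht
  have hw : walkSupersolution H t μ = (1 / μ) • (fun u => (walkCount H 0 u : ℝ)) +
      ((1 / μ ^ 2) • (fun u => (walkCount H 1 u : ℝ)) +
        (1 / (μ ^ 2 * (μ - t))) • fun u => (walkCount H 2 u : ℝ)) := by
    ext u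
    simp only [walkSupersolution, walkCount, Pi.add_apply, Pi.smul_apply, smul_eq_mul]
    ring
  have hthree : (walkCount H 3 v : ℝ) ≤ t * walkCount H 2 v :=
    mod_cast walkCount_succ_le hdeg 2 v
  calc (H.adjMatrix ℝ *ᵥ walkSupersolution H t μ) v + 1
      = walkCount H 1 v / μ + (walkCount H 2 v / μ ^ 2 +
          walkCount H 3 v / (μ ^ 2 * (μ - t))) + 1 := by
        simp only [hw, mulVec_add, mulVec_smul, Pi.add_apply, Pi.smul_apply, smul_eq_mul,
          adjMatrix_mulVec_walkCount]
        ring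
    _ ≤ walkCount H 1 v / μ + (walkCount H 2 v / μ ^ 2 +
          t * walkCount H 2 v / (μ ^ 2 * (μ - t))) + 1 := by gcongr
    _ = μ * walkSupersolution H t μ v := by
        rw [walkSupersolution]
        field_simp
        ring

variable [DecidableEq ι] {p : V → ι}

theorem partSum_walkSupersolution (p : V → ι) (H : SimpleGraph V) (t μ : ℝ) (j : ι) :
    partSum p (walkSupersolution H t μ) j = #{v | p v = j} * (1 / μ) + walkExcess p H t μ j := by
  simp only [partSum, walkSupersolution, walkExcess, sum_add_distrib, sum_const, nsmul_eq_mul]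

theorem sum_walkExcess [Fintype ι] (p : V → ι) (H : SimpleGraph V) (t μ : ℝ) :
    ∑ j, walkExcess p H t μ j =
      totalWalks H 1 / μ ^ 2 + totalWalks H 2 / (μ ^ 2 * (μ - t)) := by
  simp only [walkExcess, sum_partSum, totalWalks, sum_add_distrib, sum_div, Nat.cast_sum]

theorem walkExcess_nonneg (ht : t < μ) (j : ι) : 0 ≤ walkExcess p H t μ j := by
  have := sub_pos.2 ht
  exact partSum_nonneg (fun v => by positivity) j

theorem one_div_sq_le_walkExcess (ht : t < μ) {v : V} (hv : v ∈ H.support) :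
    1 / μ ^ 2 ≤ walkExcess p H t μ (p v) := by
  have := sub_pos.2 ht
  obtain ⟨u, hvu⟩ := hv
  have hdeg : (1 : ℝ) ≤ walkCount H 1 v := by
    rw [walkCount_one]
    exact_mod_cast (H.degree_pos_iff_exists_adj v).2 ⟨u, hvu⟩
  calc 1 / μ ^ 2 ≤ walkCount H 1 v / μ ^ 2 := by gcongr
    _ ≤ walkCount H 1 v / μ ^ 2 + walkCount H 2 v / (μ ^ 2 * (μ - t)) :=
      le_add_of_nonneg_right (by positivity)
    _ ≤ walkExcess p H t μ (p v) := by
      unfold walkExcess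
      exact le_partSum (y := fun v => walkCount H 1 v / μ ^ 2 + walkCount H 2 v / (μ ^ 2 * (μ - t)))
        (fun v => by positivity) v

end WalkSupersolution

section IntersectingEdges

variable {V : Type*} {H : SimpleGraph V}

theorem EdgesIntersect.exists_center_or_triangle [Nonempty V] (hH : EdgesIntersect H) :
    (∃ a, ∀ ⦃u v⦄, H.Adj u v → u = a ∨ v = a) ∨
      ∃ a b c, H.Adj a b ∧ H.Adj b c ∧ H.Adj a c ∧ H.support ⊆ {a, b, c} := by
  by_contra! ⟨hcenter, htriangle⟩
  obtain ⟨a, b, hab, -⟩ := hcenter (Classical.arbitrary V)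
  obtain ⟨c, hbc, hca⟩ : ∃ c, H.Adj b c ∧ c ≠ a := by
    obtain ⟨u, v, huv, hu, hv⟩ := hcenter a
    rcases hH hab huv with rfl | rfl | rfl | rfl
    exacts [absurd rfl hu, absurd rfl hv, ⟨v, huv, hv⟩, ⟨u, huv.symm, hu⟩]
  obtain ⟨d, had, hdb⟩ : ∃ d, H.Adj a d ∧ d ≠ b := by
    obtain ⟨u, v, huv, hu, hv⟩ := hcenter b
    rcases hH hab huv with rfl | rfl | rfl | rfl
    exacts [⟨v, huv, hv⟩, ⟨u, huv.symm, hu⟩, absurd rfl hu, absurd rfl hv]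
  obtain rfl : c = d := by
    rcases hH hbc had with h | h | h | h
    exacts [absurd h.symm hab.ne, absurd h.symm hdb, absurd h hca, h]
  refine htriangle a b c hab hbc had fun u hu => ?_
  obtain ⟨v, huv⟩ := hu
  have := hH hab huv
  have := hH hbc huv
  have := hH had huv
  have := hab.ne
  have := hbc.ne
  have := had.ne
  simp only [Set.mem_insert_iff, Set.mem_singleton_iff]
  grind

variable [Fintype V]

theorem degree_eq_card_edgeFinset_of_center {a : V} (ha : ∀ ⦃u v⦄, H.Adj u v → u = a ∨ v = a) :
    H.degree a = #H.edgeFinset := by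
  rw [← card_incidenceFinset_eq_degree]
  congr 1
  refine (H.incidenceFinset_subset a).antisymm fun e he => ?_
  induction e with
  | _ u v =>
    have huv : H.Adj u v := mem_edgeFinset.1 he
    rw [mem_incidenceFinset]
    exact ⟨huv, Sym2.mem_iff.2 ((ha huv).imp Eq.symm Eq.symm)⟩

theorem exists_star_embedding {a : V} (ha : ∀ ⦃u v⦄, H.Adj u v → u = a ∨ v = a)
    (hne : #H.edgeFinset ≠ 0) :
    ∃ f : completeBipartiteGraph Unit (Fin #H.edgeFinset) ↪g H, Set.range f = H.support := by
  have hcard : Fintype.card (H.neighborSet a) = #H.edgeFinset := by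
    rw [card_neighborSet_eq_degree, degree_eq_card_edgeFinset_of_center ha]
  let e : Fin #H.edgeFinset ≃ H.neighborSet a := (Fintype.equivFinOfCardEq hcard).symm
  have hae (j) : H.Adj a (e j) := (e j).2
  refine ⟨⟨⟨Sum.elim (fun _ => a) fun j => e j, ?_⟩, ?_⟩, ?_⟩
  · exact Function.Injective.sumElim (fun _ _ _ => rfl) (Subtype.val_injective.comp e.injective)
      fun _ j => (hae j).ne
  · rintro (_ | i) (_ | j)
    · simp
    · simp [hae j]
    · simp [(hae i).symm]
    · have hij : ¬ H.Adj (e i) (e j) := fun h => (ha h).elim (hae i).ne' (hae j).ne'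
      simp [hij]
  · refine (Set.Sum.elim_range _ _).trans (Set.Subset.antisymm ?_ ?_)
    · rintro v (⟨_, rfl⟩ | ⟨j, rfl⟩)
      exacts [⟨_, hae ⟨0, Nat.pos_of_ne_zero hne⟩⟩, ⟨a, (hae j).symm⟩]
    · rintro v ⟨u, hvu⟩
      rcases ha hvu with rfl | rfl
      exacts [Or.inl ⟨(), rfl⟩, Or.inr ⟨e.symm ⟨v, hvu.symm⟩, by simp⟩]

theorem exists_triangle_embedding {V : Type*} {H : SimpleGraph V} {a b c : V} (hab : H.Adj a b)
    (hbc : H.Adj b c) (hac : H.Adj a c) (hsupp : H.support ⊆ {a, b, c}) :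
    ∃ f : completeGraph (Fin 3) ↪g H, Set.range f = H.support := by
  have hrange : Set.range ![a, b, c] = {a, b, c} := by
    simp only [range_cons, range_empty, Set.union_empty, Set.singleton_union]
  have hadj (i j : Fin 3) : H.Adj (![a, b, c] i) (![a, b, c] j) ↔ i ≠ j := by
    fin_cases i <;> fin_cases j <;> simp [hab, hbc, hac, hab.symm, hbc.symm, hac.symm]
  have hinj : (![a, b, c]).Injective := fun i j hij => by
    by_contra h
    exact ((hadj i j).2 h).ne hij
  refine ⟨⟨⟨![a, b, c], hinj⟩, hadj _ _⟩, hrange.trans (Set.Subset.antisymm ?_ hsupp)⟩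
  rintro v (rfl | rfl | rfl)
  exacts [⟨_, hab⟩, ⟨_, hbc⟩, ⟨_, hac.symm⟩]

theorem map_eq_of_support_subset_range {V W : Type*} {H : SimpleGraph V} {Γ : SimpleGraph W}
    (f : Γ ↪g H) (hf : H.support ⊆ Set.range f) : Γ.map f.toEmbedding = H := by
  refine le_antisymm ((map_le_iff_le_comap _ _ _).2 fun a b hab => f.map_adj_iff.2 hab) ?_
  intro u v huv
  obtain ⟨a, rfl⟩ := hf ⟨v, huv⟩
  obtain ⟨b, rfl⟩ := hf ⟨_, huv.symm⟩
  exact ⟨huv.ne, a, b, f.map_adj_iff.1 huv, rfl, rfl⟩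

theorem card_edgeFinset_eq_of_embedding {W : Type*} [Fintype W] {Γ : SimpleGraph W}
    [DecidableRel Γ.Adj] (f : Γ ↪g H) (hf : H.support ⊆ Set.range f) :
    #H.edgeFinset = #Γ.edgeFinset := by
  rw [← card_edgeFinset_map f.toEmbedding Γ]
  congr!
  exact (map_eq_of_support_subset_range f hf).symm

theorem card_edgeFinset_completeGraph_three : #(completeGraph (Fin 3)).edgeFinset = 3 :=
  card_edgeFinset_top_eq_card_choose_two

theorem EdgesIntersect.exists_star_or_triangle_embedding (hH : EdgesIntersect H)
    (hne : #H.edgeFinset ≠ 0) :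
    (∃ f : completeBipartiteGraph Unit (Fin #H.edgeFinset) ↪g H, Set.range f = H.support) ∨
      #H.edgeFinset = 3 ∧ ∃ f : completeGraph (Fin 3) ↪g H, Set.range f = H.support := by
  obtain ⟨e, -⟩ := card_ne_zero.1 hne
  have : Nonempty V := ⟨e.out.1⟩
  obtain ⟨a, ha⟩ | ⟨a, b, c, hab, hbc, hac, hsupp⟩ := hH.exists_center_or_triangle
  · exact Or.inl (exists_star_embedding ha hne)
  · obtain ⟨f, hf⟩ := exists_triangle_embedding hab hbc hac hsupp
    exact Or.inr ⟨(card_edgeFinset_eq_of_embedding f hf.ge).trans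
      card_edgeFinset_completeGraph_three, f, hf⟩

theorem EdgesIntersect.exists_forall_support_eq (hH : EdgesIntersect H) (hne : #H.edgeFinset ≠ 0)
    {ι : Type*} {p : V → ι} (hpart : ∀ u v, H.Adj u v → p u = p v) :
    ∃ a ∈ H.support, ∀ v ∈ H.support, p v = p a := by
  obtain ⟨e, he⟩ := card_ne_zero.1 hne
  induction e with
  | _ a b =>
    have hab : H.Adj a b := mem_edgeFinset.1 he
    refine ⟨a, ⟨b, hab⟩, fun v ⟨u, hvu⟩ => ?_⟩
    have h₁ := hpart a b hab
    have h₂ := hpart v u hvu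
    rcases hH hab hvu with rfl | rfl | rfl | rfl <;> simp only [h₁, h₂]

end IntersectingEdges

section Saturation

variable {b h : ℝ}

theorem saturation_add_sub_saturation (hb : 0 ≤ b) (hh : 0 ≤ h) :
    saturation (b + h) - saturation b = h / ((1 + b) * (1 + b + h)) := by
  rw [saturation, saturation]
  field_simp
  ring

theorem saturation_lt_saturation {a : ℝ} (ha : 0 ≤ a) (hab : a < b) :
    saturation a < saturation b := by
  rw [saturation, saturation, div_lt_div_iff₀ (by linarith) (by linarith)]
  linarith

theorem saturation_le_saturation {a : ℝ} (ha : 0 ≤ a) (hab : a ≤ b) :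
    saturation a ≤ saturation b :=
  hab.eq_or_lt.elim (fun h => h ▸ le_rfl) fun h => (saturation_lt_saturation ha h).le

theorem saturation_add_le (hb : 0 ≤ b) (hh : 0 ≤ h) :
    saturation (b + h) ≤ saturation b + h / (1 + b) ^ 2 := by
  rw [← sub_le_iff_le_add', saturation_add_sub_saturation hb hh]
  exact div_le_div_of_nonneg_left hh (by positivity) (by nlinarith)

theorem le_saturation_add (hb : 0 ≤ b) (hh : 0 ≤ h) :
    saturation b + (h - h ^ 2) / (1 + b) ^ 2 ≤ saturation (b + h) := by
  rw [← le_sub_iff_add_le', saturation_add_sub_saturation hb hh,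
    div_le_div_iff₀ (by positivity) (by positivity)]
  nlinarith [mul_nonneg (mul_nonneg (mul_nonneg hh hh) hb) hb,
    mul_nonneg (mul_nonneg hh hh) hb, mul_nonneg (mul_nonneg hh hh) hh,
    mul_nonneg (mul_nonneg (mul_nonneg hh hh) hh) hb]

theorem div_sq_le_of_larger_part {q N μ : ℝ} (hq : 0 ≤ q) (hqμ : q ≤ 2 * μ) (hμ : 1 ≤ μ)
    (hN : q + 1 ≤ N) (hh : 0 ≤ h) :
    h / (1 + N * (1 / μ)) ^ 2 ≤ (h - h / (4 * μ)) / (1 + q * (1 / μ)) ^ 2 := by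
  have hratio : (μ + q) ^ 2 * (4 * μ) ≤ (4 * μ - 1) * (μ + (q + 1)) ^ 2 := by nlinarith
  calc h / (1 + N * (1 / μ)) ^ 2 ≤ h / (1 + (q + 1) * (1 / μ)) ^ 2 := by gcongr
    _ = h * (μ ^ 2 / (μ + (q + 1)) ^ 2) := by field_simp
    _ ≤ h * (μ ^ 2 * (4 * μ - 1) / (4 * μ * (μ + q) ^ 2)) := by
      gcongr h * ?_
      rw [div_le_div_iff₀ (by positivity) (by positivity)]
      nlinarith [mul_le_mul_of_nonneg_left hratio (sq_nonneg μ)]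
    _ = (h - h / (4 * μ)) / (1 + q * (1 / μ)) ^ 2 := by
      field_simp

theorem sum_saturation_add_lt {ι : Type*} [Fintype ι] [DecidableEq ι] {N e : ι → ℝ} {q μ : ℝ}
    (hq : 0 ≤ q) (hqμ : q ≤ 2 * μ) (hμ : 1 ≤ μ) (hN : ∀ j, N j = q ∨ q + 1 ≤ N j)
    (he : ∀ j, 0 ≤ e j) (hh : 0 ≤ h)
    (hlt : ∑ j, e j - (∑ j with q < N j, e j) / (4 * μ) < h - h ^ 2) {i : ι} (hi : N i = q) :
    ∑ j, saturation (N j * (1 / μ) + e j) <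
      ∑ j, saturation (N j * (1 / μ) + if j = i then h else 0) := by
  have hb (j : ι) : 0 ≤ N j * (1 / μ) := by
    have : 0 ≤ N j := (hN j).elim (fun h => h ▸ hq) fun h => by linarith
    positivity
  have hpart (j : ι) : e j / (1 + N j * (1 / μ)) ^ 2 ≤
      (e j - if q < N j then e j / (4 * μ) else 0) / (1 + q * (1 / μ)) ^ 2 := by
    rcases hN j with hj | hj
    · rw [hj, if_neg (lt_irrefl q), sub_zero]
    · rw [if_pos (by linarith)]
      exact div_sq_le_of_larger_part hq hqμ hμ hj (he j)
  have hupper : ∑ j, e j / (1 + N j * (1 / μ)) ^ 2 < (h - h ^ 2) / (1 + q * (1 / μ)) ^ 2 := by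
    refine (sum_le_sum fun j _ => hpart j).trans_lt ?_
    rw [← sum_div, sum_sub_distrib, ← sum_filter, ← sum_div]
    gcongr
  have hlower : (h - h ^ 2) / (1 + q * (1 / μ)) ^ 2 ≤
      ∑ j, (saturation (N j * (1 / μ) + if j = i then h else 0) - saturation (N j * (1 / μ))) := by
    rw [sum_eq_single i (fun j _ hj => by rw [if_neg hj, add_zero, sub_self]) (by simp), if_pos rfl,
      ← hi]
    exact le_sub_iff_add_le'.2 (le_saturation_add (hb i) hh)
  calc ∑ j, saturation (N j * (1 / μ) + e j)
      ≤ ∑ j, (saturation (N j * (1 / μ)) + e j / (1 + N j * (1 / μ)) ^ 2) :=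
        sum_le_sum fun j _ => saturation_add_le (hb j) (he j)
    _ = ∑ j, saturation (N j * (1 / μ)) + ∑ j, e j / (1 + N j * (1 / μ)) ^ 2 := sum_add_distrib
    _ < ∑ j, saturation (N j * (1 / μ)) +
        ∑ j, (saturation (N j * (1 / μ) + if j = i then h else 0) - saturation (N j * (1 / μ))) :=
        add_lt_add_right (hupper.trans_le hlower) _
    _ = ∑ j, saturation (N j * (1 / μ) + if j = i then h else 0) := by
        rw [← sum_add_distrib]
        simp only [add_sub_cancel]

theorem second_order_gain_lt {t μ : ℝ} (ht : 0 ≤ t) (hμ : 4 * (t + 2) ^ 4 < μ) :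
    2 * t / μ ^ 2 + t * (t + 1) / (μ ^ 2 * (μ - t)) - 1 / (4 * μ ^ 3) <
      2 * t / μ ^ 2 + t * (t + 1) / μ ^ 3 - (2 * t / μ ^ 2 + t * (t + 1) / μ ^ 3) ^ 2 := by
  have hpow : (t + 2) ≤ (t + 2) ^ 4 := le_self_pow₀ (by linarith) (by norm_num)
  have hμ1 : 1 ≤ μ := by linarith
  have hd : μ / 2 ≤ μ - t := by linarith
  have htail : t * (t + 1) / (μ ^ 2 * (μ - t)) - t * (t + 1) / μ ^ 3 ≤
      2 * t ^ 2 * (t + 1) / μ ^ 4 := by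
    have : 0 < μ - t := by linarith
    calc t * (t + 1) / (μ ^ 2 * (μ - t)) - t * (t + 1) / μ ^ 3
        = t ^ 2 * (t + 1) / (μ ^ 3 * (μ - t)) := by field_simp; ring
      _ ≤ t ^ 2 * (t + 1) / (μ ^ 3 * (μ / 2)) := by gcongr
      _ = 2 * t ^ 2 * (t + 1) / μ ^ 4 := by field_simp
  have hsq : (2 * t / μ ^ 2 + t * (t + 1) / μ ^ 3) ^ 2 ≤ (t ^ 2 + 3 * t) ^ 2 / μ ^ 4 := by
    calc (2 * t / μ ^ 2 + t * (t + 1) / μ ^ 3) ^ 2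
        ≤ (2 * t / μ ^ 2 + t * (t + 1) / μ ^ 2) ^ 2 := by gcongr; norm_num
      _ = (t ^ 2 + 3 * t) ^ 2 / μ ^ 4 := by field_simp; ring
  have hsmall : 2 * t ^ 2 * (t + 1) / μ ^ 4 + (t ^ 2 + 3 * t) ^ 2 / μ ^ 4 < 1 / (4 * μ ^ 3) := by
    rw [← add_div, div_lt_div_iff₀ (by positivity) (by positivity)]
    have : 4 * (2 * t ^ 2 * (t + 1) + (t ^ 2 + 3 * t) ^ 2) < μ :=
      lt_of_le_of_lt (by nlinarith [pow_nonneg ht 3, pow_nonneg ht 2]) hμ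
    nlinarith [pow_pos (zero_lt_one.trans_le hμ1) 3]
  linarith

end Saturation

section Comparison

variable {V ι : Type*} [Fintype V] [Fintype ι] [DecidableEq ι]

/-- The value of `secular` when every vertex weighs `1 / μ`, except that the part `p ⁻¹' {i}` has
an excess weight `h`. -/
noncomputable def secularWithExcess (p : V → ι) (μ : ℝ) (i : ι) (h : ℝ) : ℝ :=
  ∑ j, saturation (#{v | p v = j} * (1 / μ) + if j = i then h else 0)

/-- The star with `t` edges, or the triangle if `t = 3`, up to isolated vertices. -/
def HasExtremalShape (t : ℕ) (H : SimpleGraph V) : Prop :=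
  (t = 3 → Nonempty (H.induce H.support ≃g completeGraph (Fin 3))) ∧
    (t ≠ 3 → Nonempty (H.induce H.support ≃g completeBipartiteGraph Unit (Fin t)))

/-- The graph `H` has all its edges inside one part with exactly `q` vertices, where it forms a
star or, if it has three edges, a triangle. -/
def IsExtremalEmbedding (p : V → ι) (q : ℕ) (H : SimpleGraph V) : Prop :=
  (∃ i, #{v | p v = i} = q ∧ ∀ v ∈ H.support, p v = i) ∧ HasExtremalShape #H.edgeFinset H

variable {p : V → ι} {H : SimpleGraph V} {i : ι} {μ : ℝ} {t q : ℕ}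

theorem secularWithExcess_eq_of_card_eq {i' : ι} (h : #{v | p v = i} = #{v | p v = i'})
    (μ e : ℝ) : secularWithExcess p μ i e = secularWithExcess p μ i' e := by
  refine Fintype.sum_equiv (Equiv.swap i i') _ _ fun j => ?_
  have hcard : #{v | p v = Equiv.swap i i' j} = #{v | p v = j} := by
    rcases eq_or_ne j i with rfl | hi
    · rw [Equiv.swap_apply_left, h]
    rcases eq_or_ne j i' with rfl | hi'
    · rw [Equiv.swap_apply_right, h]
    · rw [Equiv.swap_apply_of_ne_of_ne hi hi']
  simp only [hcard, Equiv.swap_apply_eq_iff, Equiv.swap_apply_right]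

theorem secularWithExcess_lt {h h' : ℝ} (hμ : 0 < μ) (hh : 0 ≤ h) (hlt : h < h') (p : V → ι)
    (i : ι) : secularWithExcess p μ i h < secularWithExcess p μ i h' := by
  refine sum_lt_sum (fun j _ => saturation_le_saturation ?_ ?_)
    ⟨i, mem_univ i, saturation_lt_saturation ?_ ?_⟩
  · split_ifs <;> positivity
  · gcongr
    split_ifs
    exacts [hlt.le, le_rfl]
  · split_ifs <;> positivity
  · simpa using hlt

theorem secularWithExcess_le {h h' : ℝ} (hμ : 0 < μ) (hh : 0 ≤ h) (hle : h ≤ h') (p : V → ι)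
    (i : ι) : secularWithExcess p μ i h ≤ secularWithExcess p μ i h' :=
  hle.eq_or_lt.elim (fun h => h ▸ le_rfl) fun h => (secularWithExcess_lt hμ hh h p i).le

theorem exists_resolvent_of_embedding {W : Type*} [Fintype W] {Γ : SimpleGraph W}
    [DecidableRel Γ.Adj] {f : Γ ↪g H} (hf : Set.range f = H.support)
    (hi : ∀ v ∈ H.support, p v = i) (hμ : 0 < μ) {z : W → ℝ} (hz : ∀ a, 0 < z a)
    (hΓz : ∀ a, (Γ.adjMatrix ℝ *ᵥ z) a + 1 = μ * z a) :
    ∃ y : V → ℝ, (∀ v, 0 < y v) ∧ (∀ v, (H.adjMatrix ℝ *ᵥ y) v + 1 = μ * y v) ∧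
      secular p y = secularWithExcess p μ i (∑ a, (z a - 1 / μ)) := by
  refine ⟨Function.extend f z fun _ => 1 / μ, fun v => ?_, resolvent_extend f hf hμ.ne' hΓz, ?_⟩
  · by_cases hv : v ∈ Set.range f
    · obtain ⟨a, rfl⟩ := hv
      rw [f.injective.extend_apply]
      exact hz a
    · rw [Function.extend_apply' _ _ _ hv]
      exact one_div_pos.2 hμ
  · refine sum_congr rfl fun j _ => ?_
    rw [partSum_extend f.injective fun a => hi _ (hf ▸ Set.mem_range_self a)]

theorem exists_resolvent_of_star {f : completeBipartiteGraph Unit (Fin t) ↪g H}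
    (hf : Set.range f = H.support) (hi : ∀ v ∈ H.support, p v = i) (hμ : 0 < μ)
    (ht : t < μ ^ 2) :
    ∃ y : V → ℝ, (∀ v, 0 < y v) ∧ (∀ v, (H.adjMatrix ℝ *ᵥ y) v + 1 = μ * y v) ∧
      secular p y = secularWithExcess p μ i (starExcess t μ) := by
  obtain ⟨z, hz, hΓz, hsum⟩ := exists_star_resolvent hμ ht
  exact hsum ▸ exists_resolvent_of_embedding hf hi hμ hz hΓz

theorem exists_resolvent_of_hasExtremalShape (hH : HasExtremalShape t H)
    (hi : ∀ v ∈ H.support, p v = i) (hμ : 2 < μ) (ht : t < μ ^ 2) :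
    ∃ y : V → ℝ, (∀ v, 0 < y v) ∧ (∀ v, (H.adjMatrix ℝ *ᵥ y) v + 1 = μ * y v) ∧
      secular p y = secularWithExcess p μ i (extremalExcess t μ) := by
  have hμ0 : 0 < μ := two_pos.trans hμ
  by_cases h3 : t = 3
  · obtain ⟨f, hf⟩ := nonempty_induce_support_iso_iff.1 (hH.1 h3)
    obtain ⟨z, hz, hΓz, hsum⟩ := exists_triangle_resolvent hμ
    rw [extremalExcess, if_pos h3]
    exact hsum ▸ exists_resolvent_of_embedding hf hi hμ0 hz hΓz
  · obtain ⟨f, hf⟩ := nonempty_induce_support_iso_iff.1 (hH.2 h3)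
    rw [extremalExcess, if_neg h3]
    exact exists_resolvent_of_star hf hi hμ0 ht

theorem starExcess_le_extremalExcess (hμ : 3 < μ) (t : ℕ) :
    starExcess t μ ≤ extremalExcess t μ := by
  rw [extremalExcess]
  split_ifs with h3
  · rw [h3]
    exact (starExcess_three_lt_triangleExcess hμ).le
  · exact le_rfl

theorem sum_walkExcess_sub_le (hμ : 0 < μ) (ht : t < μ) (hE : #H.edgeFinset = t)
    (hloss : totalWalks H 2 < t * (t + 1) ∨ ∃ v ∈ H.support, q < #{u | p u = p v}) :
    ∑ j, walkExcess p H t μ j - (∑ j with q < #{u | p u = j}, walkExcess p H t μ j) / (4 * μ) ≤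
      2 * t / μ ^ 2 + t * (t + 1) / (μ ^ 2 * (μ - t)) - 1 / (4 * μ ^ 3) := by
  rw [sum_walkExcess, totalWalks_one, hE, Nat.cast_mul, Nat.cast_two]
  rcases hloss with hwalks | ⟨v, hv, hlarge⟩
  · have hbig : 0 ≤ (∑ j with q < #{u | p u = j}, walkExcess p H t μ j) / (4 * μ) :=
      div_nonneg (sum_nonneg fun j _ => walkExcess_nonneg ht j) (by positivity)
    have hgain : totalWalks H 2 / (μ ^ 2 * (μ - t)) ≤
        t * (t + 1) / (μ ^ 2 * (μ - t)) - 1 / (μ ^ 2 * (μ - t)) := by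
      rw [← sub_div]
      gcongr
      rw [le_sub_iff_add_le]
      exact_mod_cast hwalks
    have hone : 1 / (4 * μ ^ 3) ≤ 1 / (μ ^ 2 * (μ - t)) := by
      refine one_div_le_one_div_of_le (by positivity) ?_
      nlinarith [pow_pos hμ 3, mul_nonneg (sq_nonneg μ) (Nat.cast_nonneg t : (0 : ℝ) ≤ t)]
    linarith
  · have hbig : 1 / (4 * μ ^ 3) ≤
        (∑ j with q < #{u | p u = j}, walkExcess p H t μ j) / (4 * μ) := by
      calc 1 / (4 * μ ^ 3) = 1 / μ ^ 2 / (4 * μ) := by field_simp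
        _ ≤ _ := by
          gcongr
          exact (one_div_sq_le_walkExcess ht hv).trans (single_le_sum (f := walkExcess p H t μ)
            (fun j _ => walkExcess_nonneg ht j) (by simpa using hlarge))
    have hwalks : (totalWalks H 2 : ℝ) / (μ ^ 2 * (μ - t)) ≤
        t * (t + 1) / (μ ^ 2 * (μ - t)) := by
      gcongr
      exact_mod_cast hE ▸ totalWalks_two_le H
    linarith

theorem three_lt_and_lt_of_four_mul_pow_lt (hμ : 4 * ((t : ℝ) + 2) ^ 4 < μ) : 3 < μ ∧ t < μ := by
  have hpow : (t : ℝ) + 2 ≤ (t + 2) ^ 4 := le_self_pow₀ (by linarith) (by norm_num)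
  constructor <;> linarith

theorem secular_walkSupersolution_lt (hμ : 4 * ((t : ℝ) + 2) ^ 4 < μ) (hqμ : q ≤ 2 * μ)
    (hq : ∀ j, q ≤ #{v | p v = j}) (hi : #{v | p v = i} = q) (hE : #H.edgeFinset = t)
    (hloss : totalWalks H 2 < t * (t + 1) ∨ ∃ v ∈ H.support, q < #{u | p u = p v}) :
    secular p (walkSupersolution H t μ) <
      secularWithExcess p μ i (2 * t / μ ^ 2 + t * (t + 1) / μ ^ 3) := by
  obtain ⟨hμ3, ht⟩ := three_lt_and_lt_of_four_mul_pow_lt hμ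
  simp only [secular, partSum_walkSupersolution]
  refine sum_saturation_add_lt (N := fun j => (#{v | p v = j} : ℝ)) (q := q) (Nat.cast_nonneg q)
    hqμ (by linarith) (fun j => ?_) (walkExcess_nonneg ht) (by positivity) ?_ (by rw [hi])
  · exact_mod_cast (hq j).eq_or_lt.imp Eq.symm id
  · simp only [Nat.cast_lt]
    exact (sum_walkExcess_sub_le (by linarith) ht hE hloss).trans_lt
      (second_order_gain_lt (Nat.cast_nonneg t) hμ)

theorem EdgesIntersect.hasExtremalShape_or_star (hH : EdgesIntersect H)
    (hE : #H.edgeFinset = t) (ht : t ≠ 0) :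
    HasExtremalShape t H ∨
      t = 3 ∧ ∃ f : completeBipartiteGraph Unit (Fin t) ↪g H, Set.range f = H.support := by
  have hstar := hH.exists_star_or_triangle_embedding (hE ▸ ht)
  rw [hE, ← nonempty_induce_support_iso_iff, ← nonempty_induce_support_iso_iff] at hstar
  rcases hstar with hstar | ⟨h3, htri⟩
  · by_cases h3 : t = 3
    · exact Or.inr ⟨h3, nonempty_induce_support_iso_iff.1 hstar⟩
    · exact Or.inl ⟨fun h => absurd h h3, fun _ => hstar⟩
  · exact Or.inl ⟨fun _ => htri, fun h => absurd h3 h⟩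

theorem exists_supersolution_of_not_isExtremalEmbedding (hμ : 4 * ((t : ℝ) + 2) ^ 4 < μ)
    (hqμ : q ≤ 2 * μ) (hq : ∀ j, q ≤ #{v | p v = j}) (hi : #{v | p v = i} = q)
    (hE : #H.edgeFinset = t) (ht : t ≠ 0) (hpart : ∀ u v, H.Adj u v → p u = p v)
    (hH : ¬ IsExtremalEmbedding p q H) :
    ∃ y : V → ℝ, (∀ v, 0 < y v) ∧ (∀ v, (H.adjMatrix ℝ *ᵥ y) v + 1 ≤ μ * y v) ∧
      secular p y < secularWithExcess p μ i (extremalExcess t μ) := by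
  obtain ⟨hμ3, htμ⟩ := three_lt_and_lt_of_four_mul_pow_lt hμ
  have htμ2 : t < μ ^ 2 := by nlinarith
  by_cases hloss : totalWalks H 2 < t * (t + 1) ∨ ∃ v ∈ H.support, q < #{u | p u = p v}
  · refine ⟨_, walkSupersolution_pos (H := H) (by linarith) htμ,
      adjMatrix_mulVec_walkSupersolution_le
        (fun v => hE ▸ H.degree_le_card_edgeFinset v) (by linarith) htμ, ?_⟩
    refine (secular_walkSupersolution_lt hμ hqμ hq hi hE hloss).trans_le
      (secularWithExcess_le (by linarith) (by positivity) ?_ p i)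
    exact (le_starExcess (by linarith) htμ2).trans (starExcess_le_extremalExcess hμ3 t)
  push Not at hloss
  obtain ⟨hwalks, hsmall⟩ := hloss
  have hinter : EdgesIntersect H := by
    by_contra hdisj
    exact hwalks.not_gt (hE ▸ totalWalks_two_lt_of_not_edgesIntersect hdisj)
  obtain ⟨a, ha, hsupp⟩ := hinter.exists_forall_support_eq (hE ▸ ht) hpart
  have hcard : #{v | p v = p a} = q := (hsmall a ha).antisymm (hq _)
  obtain hshape | ⟨rfl, f, hf⟩ := hinter.hasExtremalShape_or_star hE ht
  · exact absurd ⟨⟨p a, hcard, hsupp⟩, hE ▸ hshape⟩ hH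
  · obtain ⟨y, hy, hHy, hsec⟩ := exists_resolvent_of_star hf hsupp (by linarith) htμ2
    refine ⟨y, hy, fun v => (hHy v).le, ?_⟩
    rw [hsec, secularWithExcess_eq_of_card_eq (hcard.trans hi.symm)]
    refine secularWithExcess_lt (by linarith) ?_ ?_ p i
    · exact le_trans (by positivity) (le_starExcess (by linarith) htμ2)
    · exact starExcess_three_lt_triangleExcess hμ3

variable [Nonempty V] {G : SimpleGraph V}

theorem secularWithExcess_spectralRad_le_one (hG : completeMultipartite p ≤ G)
    (hshape : HasExtremalShape t (embedded p G)) (hi : ∀ v ∈ (embedded p G).support, p v = i)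
    (hρ : 2 < spectralRad G) (ht : t < spectralRad G ^ 2) :
    secularWithExcess p (spectralRad G) i (extremalExcess t (spectralRad G)) ≤ 1 := by
  obtain ⟨y, hy, hHy, hsec⟩ := exists_resolvent_of_hasExtremalShape hshape hi hρ ht
  by_contra! hlt
  exact lt_irrefl _ (lt_spectralRad_of_one_lt_secular hG hy (fun v => (hHy v).ge) (hsec ▸ hlt))

end Comparison

section MultipartiteFam

variable {V ι : Type*} [Fintype V] [DecidableEq ι] {p : V → ι} {t q : ℕ} {G : SimpleGraph V}

/-- The graphs obtained from the complete multipartite graph whose parts are the fibres of `p` by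
embedding `t` edges into the parts (the family `𝒯_{n,r,t}` of the paper, for an arbitrary
partition). -/
def multipartiteFam {V ι : Type*} [Fintype V] (p : V → ι) (t : ℕ) : Set (SimpleGraph V) :=
  {G | completeMultipartite p ≤ G ∧ #(embedded p G).edgeFinset = t}

theorem lt_spectralRad_of_forall_lt_degree [Nonempty V] {c : ℝ} (h : ∀ v, c < G.degree v) :
    c < spectralRad G :=
  lt_spectralRad (x := Function.const V 1) (fun _ => one_pos) fun v => by
    simpa only [adjMatrix_mulVec_const_apply, Function.const_apply, mul_one] using h v

theorem card_part_le_degree (hG : completeMultipartite p ≤ G) {v : V} {j : ι} (hj : j ≠ p v) :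
    #{u | p u = j} ≤ G.degree v := by
  rw [← card_neighborFinset_eq_degree]
  refine card_le_card fun u hu => (mem_neighborFinset _ _ _).2 (hG ?_)
  exact completeMultipartite_adj.2 ((mem_filter.1 hu).2 ▸ hj.symm)

theorem lt_spectralRad_of_lt_card_part [Nonempty V] [Nontrivial ι]
    (hG : completeMultipartite p ≤ G) (hq : ∀ j, q ≤ #{v | p v = j}) {c : ℝ} (hc : c < q) :
    c < spectralRad G :=
  lt_spectralRad_of_forall_lt_degree fun v => by
    obtain ⟨j, hj⟩ := exists_ne (p v)
    exact hc.trans_le (mod_cast (hq j).trans (card_part_le_degree hG hj))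

theorem embedded_completeMultipartite_sup {V ι : Type*} {p : V → ι} {H : SimpleGraph V}
    (hH : ∀ u v, H.Adj u v → p u = p v) : embedded p (completeMultipartite p ⊔ H) = H := by
  ext u v
  rw [embedded_adj, sup_adj, completeMultipartite_adj]
  exact ⟨fun ⟨h, huv⟩ => h.resolve_left (not_not_intro huv), fun h => ⟨Or.inr h, hH u v h⟩⟩

theorem exists_embedded_copy {W : Type*} [Fintype W] {Γ : SimpleGraph W} [DecidableRel Γ.Adj]
    (hΓ : Γ.support = Set.univ) {i : ι} (hi : Fintype.card W ≤ #{v | p v = i}) :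
    ∃ G ∈ multipartiteFam p #Γ.edgeFinset, (∀ v ∈ (embedded p G).support, p v = i) ∧
      Nonempty ((embedded p G).induce (embedded p G).support ≃g Γ) := by
  obtain ⟨e⟩ : Nonempty (W ↪ {v // p v = i}) :=
    Function.Embedding.nonempty_of_card_le (by rwa [Fintype.card_subtype])
  let f : W ↪ V := e.trans (Function.Embedding.subtype _)
  have hrange : Set.range f = (Γ.map f).support := by
    rw [support_map, hΓ, Set.image_univ]
  have hpart (v) (hv : v ∈ (Γ.map f).support) : p v = i := by
    obtain ⟨a, rfl⟩ := hrange.ge hv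
    exact (e a).2
  have hemb : embedded p (completeMultipartite p ⊔ Γ.map f) = Γ.map f :=
    embedded_completeMultipartite_sup fun u v huv =>
      (hpart u ⟨v, huv⟩).trans (hpart v ⟨u, huv.symm⟩).symm
  refine ⟨completeMultipartite p ⊔ Γ.map f, ⟨le_sup_left, ?_⟩, ?_, ?_⟩
  · rw [← card_edgeFinset_map f Γ]
    congr!
  · rwa [hemb]
  · rw [hemb]
    exact nonempty_induce_support_iso_iff.2 ⟨Embedding.map f Γ, hrange⟩

theorem support_completeBipartiteGraph (V W : Type*) [Nonempty V] [Nonempty W] :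
    (completeBipartiteGraph V W).support = Set.univ := by
  refine Set.eq_univ_of_forall ?_
  rintro (_ | _)
  exacts [⟨Sum.inr (Classical.arbitrary W), by simp⟩, ⟨Sum.inl (Classical.arbitrary V), by simp⟩]

theorem card_edgeFinset_completeBipartiteGraph (V W : Type*) [Fintype V] [Fintype W] :
    #(completeBipartiteGraph V W).edgeFinset = Fintype.card V * Fintype.card W := by
  have h := encard_edgeSet_completeBipartiteGraph (W₁ := V) (W₂ := W)
  rw [← coe_edgeFinset, Set.encard_coe_eq_coe_finsetCard, ENat.card_eq_coe_fintype_card,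
    ENat.card_eq_coe_fintype_card] at h
  exact_mod_cast h

theorem exists_isExtremalEmbedding (ht : t ≠ 0) (htq : t + 1 ≤ q) {i : ι}
    (hi : #{v | p v = i} = q) :
    ∃ G ∈ multipartiteFam p t, IsExtremalEmbedding p q (embedded p G) := by
  by_cases h3 : t = 3
  · obtain ⟨G, hG, hsupp, hiso⟩ := exists_embedded_copy (p := p) (i := i)
      (Γ := completeGraph (Fin 3)) support_top_of_nontrivial (by simp; omega)
    rw [card_edgeFinset_completeGraph_three, ← h3] at hG
    exact ⟨G, hG, ⟨i, hi, hsupp⟩, fun _ => hiso, fun h => absurd (hG.2.trans h3) h⟩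
  · have : Nonempty (Fin t) := ⟨0, Nat.pos_of_ne_zero ht⟩
    obtain ⟨G, hG, hsupp, hiso⟩ := exists_embedded_copy (p := p) (i := i)
      (support_completeBipartiteGraph Unit (Fin t)) (by simp; omega)
    rw [card_edgeFinset_completeBipartiteGraph, Fintype.card_unit, one_mul, Fintype.card_fin] at hG
    refine ⟨G, hG, ⟨i, hi, hsupp⟩, ?_⟩
    rw [hG.2]
    exact ⟨fun h => absurd h h3, fun _ => hiso⟩

variable [Finite ι] {G' : SimpleGraph V}

theorem spectralRad_le_of_isExtremalEmbedding [Nonempty V] (hG : G ∈ multipartiteFam p t)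
    (hG' : G' ∈ multipartiteFam p t) (h : IsExtremalEmbedding p q (embedded p G))
    (h' : IsExtremalEmbedding p q (embedded p G')) (hρ : 2 < spectralRad G)
    (ht : t < spectralRad G ^ 2) : spectralRad G' ≤ spectralRad G := by
  have := Fintype.ofFinite ι
  obtain ⟨⟨i, hiq, hi⟩, hshape⟩ := h
  obtain ⟨⟨i', hiq', hi'⟩, hshape'⟩ := h'
  obtain ⟨y, hy, hHy, hsec⟩ := exists_resolvent_of_hasExtremalShape (hG'.2 ▸ hshape') hi' hρ ht
  refine spectralRad_le_of_secular_le_one hG'.1 hy (fun v => (hHy v).le) ?_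
  rw [hsec, secularWithExcess_eq_of_card_eq (hiq'.trans hiq.symm)]
  exact secularWithExcess_spectralRad_le_one hG.1 (hG.2 ▸ hshape) hi hρ ht

theorem spectralRad_lt_of_not_isExtremalEmbedding [Nonempty V] (hG : G ∈ multipartiteFam p t)
    (hG' : G' ∈ multipartiteFam p t) (h : IsExtremalEmbedding p q (embedded p G))
    (h' : ¬ IsExtremalEmbedding p q (embedded p G')) (ht : t ≠ 0)
    (hq : ∀ j, q ≤ #{v | p v = j}) (hρ : 4 * ((t : ℝ) + 2) ^ 4 < spectralRad G)
    (hqρ : q ≤ 2 * spectralRad G) : spectralRad G' < spectralRad G := by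
  have := Fintype.ofFinite ι
  obtain ⟨⟨i, hiq, hi⟩, hshape⟩ := h
  obtain ⟨hρ3, htρ⟩ := three_lt_and_lt_of_four_mul_pow_lt hρ
  obtain ⟨y, hy, hHy, hsec⟩ := exists_supersolution_of_not_isExtremalEmbedding hρ hqρ hq hiq
    hG'.2 ht (fun u v huv => (embedded_adj.1 huv).2) h'
  refine spectralRad_lt_of_secular_lt_one hG'.1 hy hHy (hsec.trans_le ?_)
  exact secularWithExcess_spectralRad_le_one hG.1 (hG.2 ▸ hshape) hi (by linarith) (by nlinarith)

theorem stmt_14_general [Nontrivial ι] (ht : t ≠ 0)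
    (hq : IsLeast (Set.range fun j => #{v | p v = j}) q) (htq : 4 * (t + 2) ^ 4 < q)
    (hG : G ∈ multipartiteFam p t) :
    G ∈ SPEXset (multipartiteFam p t) ↔ IsExtremalEmbedding p q (embedded p G) := by
  obtain ⟨⟨i, hi⟩, hmin⟩ := hq
  have hpart (j) : q ≤ #{v | p v = j} := hmin ⟨j, rfl⟩
  have htq' : t + 1 ≤ q := by
    have := Nat.le_self_pow (n := 4) (by norm_num) (t + 2)
    lia
  have : Nonempty V := (Finset.card_pos.1 (hi ▸ htq.pos)).to_type
  have hρ {G₀} (hG₀ : G₀ ∈ multipartiteFam p t) : 4 * ((t : ℝ) + 2) ^ 4 < spectralRad G₀ :=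
    lt_spectralRad_of_lt_card_part hG₀.1 hpart (mod_cast htq)
  have hqρ {G₀} (hG₀ : G₀ ∈ multipartiteFam p t) : q ≤ 2 * spectralRad G₀ := by
    have : (0 : ℝ) < q := mod_cast htq.pos
    have := lt_spectralRad_of_lt_card_part hG₀.1 hpart (half_lt_self this)
    linarith
  refine ⟨fun hmax => ?_, fun h => ⟨hG, fun G' hG' => ?_⟩⟩
  · obtain ⟨G₀, hG₀, h₀⟩ := exists_isExtremalEmbedding ht htq' hi
    by_contra h
    exact (hmax.2 G₀ hG₀).not_gt
      (spectralRad_lt_of_not_isExtremalEmbedding hG₀ hG h₀ h ht hpart (hρ hG₀) (hqρ hG₀))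
  · by_cases h' : IsExtremalEmbedding p q (embedded p G')
    · obtain ⟨hρ3, htρ⟩ := three_lt_and_lt_of_four_mul_pow_lt (hρ hG)
      exact spectralRad_le_of_isExtremalEmbedding hG hG' h h' (by linarith) (by nlinarith)
    · exact (spectralRad_lt_of_not_isExtremalEmbedding hG hG' h h' ht hpart (hρ hG) (hqρ hG)).le

end MultipartiteFam

section Turan

variable {n r : ℕ} [NeZero r]

/-- The part of the Turán graph `T(n,r)` that contains the vertex `v`: the residue of
`v` mod `r`. -/
def turanPart (n r : ℕ) [NeZero r] (v : Fin n) : Fin r :=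
  Fin.ofNat r v

theorem turanPart_eq_iff {v : Fin n} {i : Fin r} : turanPart n r v = i ↔ (v : ℕ) % r = i :=
  Fin.ext_iff

theorem turanGraph_eq_completeMultipartite :
    turanGraph n r = completeMultipartite (turanPart n r) := by
  ext u v
  rw [completeMultipartite_adj, Ne, turanPart_eq_iff]
  rfl

theorem emb_eq_embedded (G : SimpleGraph (Fin n)) :
    emb n r G = embedded (turanPart n r) G := by
  rw [emb, embedded, turanGraph_eq_completeMultipartite]

theorem partSize_eq_card (i : Fin r) : partSize n r i = #{v | turanPart n r v = i} := by
  simp only [partSize, turanPart_eq_iff]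

theorem turanFam_eq_multipartiteFam (n r t : ℕ) [NeZero r] :
    TuranFam n r t = multipartiteFam (turanPart n r) t := by
  ext G
  have hcard : #(emb n r G).edgeFinset = #(embedded (turanPart n r) G).edgeFinset := by
    congr!
    exact funext emb_eq_embedded
  rw [TuranFam, multipartiteFam, Set.mem_ofPred_eq, Set.mem_ofPred_eq, hcard,
    turanGraph_eq_completeMultipartite, emb_eq_embedded]
  refine and_congr_right fun _ => and_iff_right fun u v huv => ?_
  exact (turanPart_eq_iff (r := r)).1 (embedded_adj.1 huv).2

theorem inPart_iff (i : Fin r) (G : SimpleGraph (Fin n)) :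
    inPart n r i G ↔ ∀ v ∈ (emb n r G).support, turanPart n r v = i := by
  simp only [inPart, turanPart_eq_iff]
  exact ⟨fun h v ⟨u, hvu⟩ => h v u hvu, fun h u v huv => h u ⟨v, huv⟩⟩

theorem partSize_eq (i : Fin r) : partSize n r i = n / r + if (i : ℕ) < n % r then 1 else 0 := by
  have h := Nat.count_modEq_card n (NeZero.pos r) i
  rw [Nat.mod_eq_of_lt i.2] at h
  rw [partSize, card_filter, Fin.sum_univ_eq_sum_range (fun v => if v % r = i then 1 else 0),
    ← card_filter, ← h, Nat.count_eq_card_filter_range]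
  simp only [Nat.ModEq, Nat.mod_eq_of_lt i.2]

theorem isLeast_card_turanPart (n r : ℕ) [NeZero r] :
    IsLeast (Set.range fun i => #{v | turanPart n r v = i}) (n / r) := by
  simp only [← partSize_eq_card, partSize_eq]
  refine ⟨⟨⟨r - 1, Nat.pred_lt (NeZero.ne r)⟩, ?_⟩, ?_⟩
  · have : ¬ r - 1 < n % r := (Nat.le_sub_one_of_lt (Nat.mod_lt n (NeZero.pos r))).not_gt
    simp only [this, if_false, add_zero]
  · rintro _ ⟨i, rfl⟩
    exact Nat.le_add_right _ _

theorem isExtremalEmbedding_turanPart_iff {t : ℕ} {G : SimpleGraph (Fin n)}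
    (hG : G ∈ multipartiteFam (turanPart n r) t) :
    IsExtremalEmbedding (turanPart n r) (n / r) (embedded (turanPart n r) G) ↔
      (∃ i : Fin r, partSize n r i = n / r ∧ inPart n r i G) ∧ HasExtremalShape t (emb n r G) := by
  simp only [IsExtremalEmbedding, hG.2, partSize_eq_card, inPart_iff, emb_eq_embedded]

end Turan

/-- (Corollary 1.7.) For `k ≥ 2`, `r ≥ 2` and sufficiently large `n`:
a graph `G ∈ 𝒯_{n,r,k-1}` has maximum spectral radius in `𝒯_{n,r,k-1}` iff all its `k-1`
embedded edges lie inside one part of size `⌊n/r⌋` and the subgraph induced by these edges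
(i.e. the restriction of `H^G` to its support) is `K₃` when `k = 4` and `K_{1,k-1}`
otherwise. -/
theorem stmt_14 (k r : ℕ) (hk : 2 ≤ k) (hr : 2 ≤ r) :
    ∃ N : ℕ, ∀ n : ℕ, N ≤ n → ∀ G ∈ TuranFam n r (k - 1),
      (G ∈ SPEXset (TuranFam n r (k - 1)) ↔
        (∃ i : Fin r, partSize n r i = n / r ∧ inPart n r i G) ∧
        (k = 4 →
          Nonempty ((emb n r G).induce (emb n r G).support ≃g completeGraph (Fin 3))) ∧
        (k ≠ 4 →
          Nonempty ((emb n r G).induce (emb n r G).support ≃g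
            completeBipartiteGraph Unit (Fin (k - 1))))) := by
  have : NeZero r := ⟨by lia⟩
  have : Nontrivial (Fin r) := Fin.nontrivial_iff_two_le.2 hr
  have hk4 : k = 4 ↔ k - 1 = 3 := by lia
  refine ⟨(4 * (k - 1 + 2) ^ 4 + 1) * r, fun n hn G hG => ?_⟩
  have hq : 4 * (k - 1 + 2) ^ 4 < n / r := (Nat.le_div_iff_mul_le (NeZero.pos r)).2 hn
  rw [turanFam_eq_multipartiteFam] at hG ⊢
  rw [stmt_14_general (by lia) (isLeast_card_turanPart n r) hq hG,
    isExtremalEmbedding_turanPart_iff hG]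
  simp only [HasExtremalShape, hk4, ne_eq]
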